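/- Let (X,d,𝔪) be a PI space with 𝔪(X) = ∞, and let E ⊂ X be an indecomposable set. If F ⊂ X is an indecomposable set with 𝔪(E ∖ sat(F)) = 0, then 𝔪(sat(E) ∖ sat(F)) = 0. -/

import Mathlib

open MeasureTheory Metric Filter Set ENNReal NNReal Topology

/-- A curve: a rectifiable continuous map from a compact interval into `X`,
parametrized by arc length (hence `1`-Lipschitz on `[0, len]`). -/
structure Curve (X : Type*) [MetricSpace X] where
  len : ℝ
  len_nonneg : 0 ≤ len
  toFun : ℝ → X
  lipschitzOn : LipschitzOnWith 1 toFun (Set.Icc 0 len)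

namespace Curve

variable {X : Type*} [MetricSpace X]

/-- A curve is nonconstant if it attains two distinct values. -/
def IsNonconstant (γ : Curve X) : Prop :=
  ∃ s ∈ Set.Icc (0:ℝ) γ.len, ∃ t ∈ Set.Icc (0:ℝ) γ.len, γ.toFun s ≠ γ.toFun t

/-- A curve lies in a set `W`. -/
def IsIn (γ : Curve X) (W : Set X) : Prop :=
  ∀ s ∈ Set.Icc (0:ℝ) γ.len, γ.toFun s ∈ W

end Curve

variable {X : Type*} [MetricSpace X] [MeasurableSpace X] [BorelSpace X]

/-- The curve integral `∫_γ g ds` for an arc-length parametrized curve. -/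
noncomputable def curveLintegral (g : X → ℝ≥0∞) (γ : Curve X) : ℝ≥0∞ :=
  ∫⁻ s in Set.Icc (0:ℝ) γ.len, g (γ.toFun s)

/-- The upper gradient inequality `|u(x) - u(y)| ≤ ∫_γ g ds` along a curve `γ`
with endpoints `x, y`. -/
def UpperGradIneq (g : X → ℝ≥0∞) (u : X → ℝ) (γ : Curve X) : Prop :=
  ENNReal.ofReal |u (γ.toFun 0) - u (γ.toFun γ.len)| ≤ curveLintegral g γ

/-- The 1-modulus of a family of curves. -/
noncomputable def mod1 (μ : Measure X) (Γ : Set (Curve X)) : ℝ≥0∞ :=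
  ⨅ (ρ : X → ℝ≥0∞) (_ : Measurable ρ ∧ ∀ γ ∈ Γ, 1 ≤ curveLintegral ρ γ),
    ∫⁻ x, ρ x ∂μ

/-- `g` is a 1-weak upper gradient of `u` in `W`: the upper gradient inequality
holds for all nonconstant curves in `W` outside a family of 1-modulus zero. -/
def IsWeakUpperGradientOn (μ : Measure X) (g : X → ℝ≥0∞) (u : X → ℝ) (W : Set X) : Prop :=
  Measurable g ∧
    mod1 μ {γ : Curve X | γ.IsNonconstant ∧ γ.IsIn W ∧ ¬ UpperGradIneq g u γ} = 0

/-- `g` is a (strong) upper gradient of `u` in `X`. -/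
def IsUpperGradient (g : X → ℝ≥0∞) (u : X → ℝ) : Prop :=
  Measurable g ∧ ∀ γ : Curve X, γ.IsNonconstant → UpperGradIneq g u γ

/-- `∫_W g_u dμ`: the integral over `W` of the minimal 1-weak upper gradient of `u`
in `W`, equivalently the infimum of `∫_W g dμ` over all 1-weak upper gradients `g`
of `u` in `W`. -/
noncomputable def gradEnergy (μ : Measure X) (u : X → ℝ) (W : Set X) : ℝ≥0∞ :=
  ⨅ (g : X → ℝ≥0∞) (_ : IsWeakUpperGradientOn μ g u W), ∫⁻ x in W, g x ∂μ

/-- `u` is locally Lipschitz on `W`. -/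
def LocLipschitzOn (u : X → ℝ) (W : Set X) : Prop :=
  ∀ x ∈ W, ∃ K : ℝ≥0, ∃ t ∈ nhdsWithin x W, LipschitzOnWith K u t

/-- Convergence `uᵢ → v` in `L¹_loc(W)`. -/
def TendstoL1loc (μ : Measure X) (W : Set X) (u : ℕ → X → ℝ) (v : X → ℝ) : Prop :=
  ∀ W' : Set X, IsOpen W' → IsCompact (closure W') → closure W' ⊆ W →
    Tendsto (fun i => ∫⁻ x in W', ENNReal.ofReal |u i x - v x| ∂μ) atTop (𝓝 0)

/-- The total variation `‖Dv‖(W)` of a function `v` in an open set `W`. -/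
noncomputable def variationOn (μ : Measure X) (v : X → ℝ) (W : Set X) : ℝ≥0∞ :=
  ⨅ (u : ℕ → X → ℝ) (_ : (∀ i, LocLipschitzOn (u i) W) ∧ TendstoL1loc μ W u v),
    Filter.liminf (fun i => gradEnergy μ (u i) W) Filter.atTop

/-- The total variation `‖Dv‖(A)` of a function `v` in an arbitrary set `A`. -/
noncomputable def totalVar (μ : Measure X) (v : X → ℝ) (A : Set X) : ℝ≥0∞ :=
  ⨅ (W : Set X) (_ : IsOpen W ∧ A ⊆ W), variationOn μ v W

/-- The perimeter `P(E, A) = ‖Dχ_E‖(A)`. -/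
noncomputable def perimeter (μ : Measure X) (E A : Set X) : ℝ≥0∞ :=
  totalVar μ (Set.indicator E fun _ => (1 : ℝ)) A

/-- The measure `μ` is doubling. -/
def IsDoublingMeasure (μ : Measure X) : Prop :=
  ∃ C : ℝ≥0∞, 1 ≤ C ∧ ∀ (x : X) (r : ℝ), 0 < r → μ (ball x (2 * r)) ≤ C * μ (ball x r)

/-- The space supports a (1,1)-Poincaré inequality:
`⨍_{B(x,r)} |u - u_{B(x,r)}| dμ ≤ C r ⨍_{B(x,λr)} g dμ` for every ball, every
`u ∈ L¹_loc(X)` and every upper gradient `g` of `u` (stated here multiplied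
through by the measures of the two balls). -/
def SupportsPoincare (μ : Measure X) : Prop :=
  ∃ C lam : ℝ, 0 < C ∧ 1 ≤ lam ∧
    ∀ (x : X) (r : ℝ), 0 < r → ∀ (u : X → ℝ) (g : X → ℝ≥0∞),
      (∀ (y : X) (s : ℝ), IntegrableOn u (ball y s) μ) → IsUpperGradient g u →
        μ (ball x (lam * r)) *
            ∫⁻ y in ball x r, ENNReal.ofReal |u y - ⨍ z in ball x r, u z ∂μ| ∂μ ≤
          ENNReal.ofReal (C * r) * μ (ball x r) * ∫⁻ y in ball x (lam * r), g y ∂μ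

/-- `(X, d, μ)` is a PI space: complete, doubling, supporting a (1,1)-Poincaré
inequality. -/
def IsPISpace (μ : Measure X) : Prop :=
  CompleteSpace X ∧ IsDoublingMeasure μ ∧ SupportsPoincare μ

/-- A set `E` of finite perimeter is decomposable in a Borel set `D` if there is a
partition `{F, G}` of `E ∩ D` into sets of finite perimeter in `D`, both of positive
measure, with `P(E,D) = P(F,D) + P(G,D)`. -/
def IsDecomposableIn (μ : Measure X) (E D : Set X) : Prop :=
  ∃ F G : Set X, MeasurableSet F ∧ MeasurableSet G ∧ Disjoint F G ∧ F ∪ G = E ∩ D ∧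
    perimeter μ F D < ⊤ ∧ perimeter μ G D < ⊤ ∧ 0 < μ F ∧ 0 < μ G ∧
    perimeter μ E D = perimeter μ F D + perimeter μ G D

/-- `E` is indecomposable in `D`. -/
def IsIndecomposableIn (μ : Measure X) (E D : Set X) : Prop :=
  ¬ IsDecomposableIn μ E D

/-- `{F i}_{i ∈ I}` is a (finite or countable) partition of `E` into indecomposable
Borel sets of positive measure and finite perimeter whose perimeters sum to `P(E,X)`;
this is the defining property of the essential connected components `𝒞𝒞ᵉ(E)`. -/
def IsEssentialPartition (μ : Measure X) (E : Set X) (I : Set ℕ) (F : ℕ → Set X) : Prop :=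
  (∀ i ∈ I, MeasurableSet (F i)) ∧
  (∀ i ∈ I, ∀ j ∈ I, i ≠ j → Disjoint (F i) (F j)) ∧
  (⋃ i ∈ I, F i) = E ∧
  (∀ i ∈ I, 0 < μ (F i)) ∧
  (∀ i ∈ I, perimeter μ (F i) Set.univ < ⊤) ∧
  (∀ i ∈ I, IsIndecomposableIn μ (F i) Set.univ) ∧
  perimeter μ E Set.univ = ∑' i : I, perimeter μ (F i.1) Set.univ

/-- Given a decomposition `{G i}_{i ∈ I}` of `X ∖ E` into essential connected
components, the saturation of `E`: the union of `E` and its holes, i.e. the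
components of finite measure. -/
def saturationOf (μ : Measure X) (E : Set X) (I : Set ℕ) (G : ℕ → Set X) : Set X :=
  E ∪ ⋃ (i : ℕ) (_ : i ∈ I ∧ μ (G i) < ⊤), G i

/-- The measure-theoretic boundary `∂* E`: points where both `E` and its complement
have strictly positive upper density. -/
def mtBoundary (μ : Measure X) (E : Set X) : Set X :=
  {x : X |
    0 < Filter.limsup (fun r => μ (ball x r ∩ E) / μ (ball x r)) (nhdsWithin 0 (Set.Ioi 0)) ∧
    0 < Filter.limsup (fun r => μ (ball x r \ E) / μ (ball x r)) (nhdsWithin 0 (Set.Ioi 0))}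

/-- The restricted codimension-one Hausdorff content `ℋ_R`. -/
noncomputable def codimOneContent (μ : Measure X) (R : ℝ) (A : Set X) : ℝ≥0∞ :=
  ⨅ (s : Set (X × ℝ))
    (_ : s.Countable ∧ (∀ p ∈ s, 0 < p.2 ∧ p.2 ≤ R) ∧ A ⊆ ⋃ p ∈ s, ball p.1 p.2),
    ∑' p : s, μ (ball (p : X × ℝ).1 (p : X × ℝ).2) / ENNReal.ofReal (p : X × ℝ).2

/-- The codimension-one Hausdorff measure `ℋ(A) = lim_{R → 0} ℋ_R(A)`. -/
noncomputable def codimOneHausdorff (μ : Measure X) (A : Set X) : ℝ≥0∞ :=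
  ⨆ (R : ℝ) (_ : 0 < R), codimOneContent μ R A

theorem ENNReal.liminf_add_liminf_le (u v : ℕ → ℝ≥0∞) :
    liminf u atTop + liminf v atTop ≤ liminf (fun n => u n + v n) atTop := by
  have hmono : ∀ w : ℕ → ℝ≥0∞, Monotone fun n => ⨅ i ≥ n, w i := fun w m n hmn =>
    le_iInf₂ fun i hi => iInf₂_le i (hmn.trans hi)
  simp only [liminf_eq_iSup_iInf_of_nat]
  rw [ENNReal.iSup_add_iSup_of_monotone (hmono u) (hmono v)]
  exact iSup_mono fun n => le_iInf₂ fun i hi => add_le_add (iInf₂_le i hi) (iInf₂_le i hi)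

theorem ENNReal.le_add_of_forall_gt {a b c : ℝ≥0∞} (h : ∀ a' > a, ∀ b' > b, c ≤ a' + b') :
    c ≤ a + b := by
  refine ENNReal.le_of_forall_pos_le_add fun ε hε hab => ?_
  obtain ⟨ha, hb⟩ := ENNReal.add_ne_top.mp hab.ne
  have hε' : (ε : ℝ≥0∞) / 2 ≠ 0 := by simp [hε.ne']
  refine (h _ (ENNReal.lt_add_right ha hε') _ (ENNReal.lt_add_right hb hε')).trans_eq ?_
  rw [add_add_add_comm, ENNReal.add_halves]

/-- A function dominated by the indefinite integral of `a` has derivative dominated by `a`. -/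
theorem ae_ofReal_abs_deriv_le {L : ℝ} {f : ℝ → ℝ} {a : ℝ → ℝ≥0∞}
    (ha : AEMeasurable a (volume.restrict (Icc 0 L)))
    (hfin : ∫⁻ x in Icc 0 L, a x ≠ ⊤)
    (hfa : ∀ s ∈ Icc 0 L, ∀ t ∈ Icc 0 L, s ≤ t →
      ENNReal.ofReal |f s - f t| ≤ ∫⁻ x in Icc s t, a x) :
    ∀ᵐ x ∂volume.restrict (Icc 0 L), DifferentiableAt ℝ f x →
      ENNReal.ofReal |deriv f x| ≤ a x := by
  rcases lt_or_ge L 0 with hL | hL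
  · simp [Icc_eq_empty (not_le.mpr hL)]
  set φ : ℝ → ℝ := fun x => (a x).toReal
  have hφ : IntegrableOn φ (Icc 0 L) := integrable_toReal_of_lintegral_ne_top ha hfin
  have hsub : ∀ s ∈ Icc 0 L, ∀ t ∈ Icc 0 L, IntervalIntegrable φ volume s t := fun s hs t ht =>
    (hφ.mono_set (uIcc_subset_Icc hs ht)).intervalIntegrable
  have h0 : (0 : ℝ) ∈ Icc 0 L := ⟨le_rfl, hL⟩
  have hbound : ∀ s ∈ Icc 0 L, ∀ t ∈ Icc 0 L, s ≤ t →
      |f s - f t| ≤ (∫ x in (0)..t, φ x) - ∫ x in (0)..s, φ x := by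
    intro s hs t ht hst
    rw [intervalIntegral.integral_interval_sub_left (hsub 0 h0 t ht) (hsub 0 h0 s hs),
      intervalIntegral.integral_of_le hst, ← integral_Icc_eq_integral_Ioc]
    have hss : Icc s t ⊆ Icc 0 L := Icc_subset_Icc hs.1 ht.2
    have hfin' : ∫⁻ x in Icc s t, a x ≠ ⊤ :=
      ne_top_of_le_ne_top hfin (lintegral_mono_set hss)
    have ha' : AEMeasurable a (volume.restrict (Icc s t)) := ha.mono_set hss
    rw [integral_toReal ha' (ae_lt_top' ha' hfin')]
    exact (ENNReal.ofReal_le_iff_le_toReal hfin').mp (hfa s hs t ht hst)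
  have hlt := ae_lt_top' ha hfin
  have hder := ((hsub 0 h0 L ⟨hL, le_rfl⟩).ae_hasDerivAt_integral)
  have hne0 : ∀ᵐ x : ℝ, x ≠ 0 := by simp [ae_iff, measure_singleton]
  have hneL : ∀ᵐ x : ℝ, x ≠ L := by simp [ae_iff, measure_singleton]
  filter_upwards [hlt, ae_restrict_of_ae hder, ae_restrict_of_ae hne0, ae_restrict_of_ae hneL,
    ae_restrict_mem measurableSet_Icc] with x hxlt hxd hx0 hxL hx hdiff
  have hnhds : Icc 0 L ∈ 𝓝 x :=
    Icc_mem_nhds (lt_of_le_of_ne hx.1 (Ne.symm hx0)) (lt_of_le_of_ne hx.2 hxL)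
  have hΦ := hxd (by rwa [uIcc_of_le hL]) 0 (by simp)
  have key : ∀ F : ℝ → ℝ, ∀ F', MonotoneOn F (Icc 0 L) → HasDerivAt F F' x → 0 ≤ F' := by
    intro F F' hF hF'
    have := hF.derivWithin_nonneg (x := x)
    rwa [derivWithin_of_mem_nhds hnhds, hF'.deriv] at this
  have h1 := key _ _ (fun s hs t ht hst => by
    have := (abs_le.mp (hbound s hs t ht hst)).1
    simp only [Pi.sub_apply]; linarith) (hΦ.sub hdiff.hasDerivAt)
  have h2 := key _ _ (fun s hs t ht hst => by
    have := (abs_le.mp (hbound s hs t ht hst)).2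
    simp only [Pi.add_apply]; linarith) (hΦ.add hdiff.hasDerivAt)
  rw [ENNReal.ofReal_le_iff_le_toReal hxlt.ne, abs_le]
  constructor <;> linarith

theorem LipschitzOnWith.ofReal_abs_sub_le_lintegral_deriv {L : ℝ} (hL : 0 ≤ L) {f : ℝ → ℝ}
    {K : ℝ≥0} (hf : LipschitzOnWith K f (Icc 0 L)) :
    ENNReal.ofReal |f 0 - f L| ≤ ∫⁻ x in Icc 0 L, ENNReal.ofReal |deriv f x| := by
  rw [← uIcc_of_le hL] at hf
  have hac := hf.absolutelyContinuousOnInterval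
  rw [abs_sub_comm, ← hac.integral_deriv_eq_sub, intervalIntegral.integral_of_le hL,
    ← integral_Icc_eq_integral_Ioc]
  simp_rw [← Real.norm_eq_abs, ofReal_norm]
  exact enorm_integral_le_lintegral_enorm _

theorem deriv_eq_of_le_of_eq {f m : ℝ → ℝ} {x : ℝ} (hf : DifferentiableAt ℝ f x)
    (hm : DifferentiableAt ℝ m x) (hle : ∀ᶠ y in 𝓝 x, m y ≤ f y) (heq : m x = f x) :
    deriv m x = deriv f x := by
  have hmin : IsLocalMin (f - m) x := by
    filter_upwards [hle] with y hy
    simp only [Pi.sub_apply, heq, sub_self]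
    linarith
  have := hmin.deriv_eq_zero
  rw [deriv_sub hf hm] at this
  linarith

/-- A Lipschitz function lying on one side of two Lipschitz functions and agreeing at every point
with one of them inherits the upper gradient of the one with which it agrees. -/
theorem ofReal_abs_sub_le_of_switch {L : ℝ} (hL : 0 ≤ L) {f w m : ℝ → ℝ} {K : ℝ≥0}
    (hf : LipschitzOnWith K f (Icc 0 L)) (hw : LipschitzOnWith K w (Icc 0 L))
    (hm : LipschitzOnWith K m (Icc 0 L)) {a b k : ℝ → ℝ≥0∞}
    (ha : AEMeasurable a (volume.restrict (Icc 0 L)))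
    (hb : AEMeasurable b (volume.restrict (Icc 0 L)))
    (hafin : ∫⁻ x in Icc 0 L, a x ≠ ⊤) (hbfin : ∫⁻ x in Icc 0 L, b x ≠ ⊤)
    (hfa : ∀ s ∈ Icc 0 L, ∀ t ∈ Icc 0 L, s ≤ t →
      ENNReal.ofReal |f s - f t| ≤ ∫⁻ x in Icc s t, a x)
    (hwb : ∀ s ∈ Icc 0 L, ∀ t ∈ Icc 0 L, s ≤ t →
      ENNReal.ofReal |w s - w t| ≤ ∫⁻ x in Icc s t, b x)
    (hside : (∀ x, m x ≤ f x ∧ m x ≤ w x) ∨ ∀ x, f x ≤ m x ∧ w x ≤ m x)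
    (hk : ∀ x, (m x = f x ∧ k x = a x) ∨ (m x = w x ∧ k x = b x)) :
    ENNReal.ofReal |m 0 - m L| ≤ ∫⁻ x in Icc 0 L, k x := by
  refine (hm.ofReal_abs_sub_le_lintegral_deriv hL).trans (lintegral_mono_ae ?_)
  have hdiff : ∀ g : ℝ → ℝ, LipschitzOnWith K g (Icc 0 L) →
      ∀ᵐ x ∂volume.restrict (Icc 0 L), DifferentiableAt ℝ g x := by
    intro g hg
    rw [← uIcc_of_le hL] at hg ⊢
    exact (ae_restrict_iff' measurableSet_uIcc).mpr
      hg.absolutelyContinuousOnInterval.ae_differentiableAt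
  filter_upwards [hdiff f hf, hdiff w hw, hdiff m hm, ae_ofReal_abs_deriv_le ha hafin hfa,
    ae_ofReal_abs_deriv_le hb hbfin hwb] with x hxf hxw hxm hxa hxb
  have key : ∀ g : ℝ → ℝ, DifferentiableAt ℝ g x → m x = g x →
      ((∀ y, m y ≤ g y) ∨ ∀ y, g y ≤ m y) → deriv m x = deriv g x := by
    rintro g hg hgx (h | h)
    · exact deriv_eq_of_le_of_eq hg hxm (.of_forall h) hgx
    · exact (deriv_eq_of_le_of_eq hxm hg (.of_forall h) hgx.symm).symm
  rcases hk x with ⟨hmx, hkx⟩ | ⟨hmx, hkx⟩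
  · rw [hkx, key f hxf hmx (hside.imp (fun h y => (h y).1) fun h y => (h y).1)]
    exact hxa hxf
  · rw [hkx, key w hxw hmx (hside.imp (fun h y => (h y).2) fun h y => (h y).2)]
    exact hxb hxw

/-- The restriction of a curve to a subinterval. -/
def Curve.subcurve (γ : Curve X) (a b : ℝ) (ha : 0 ≤ a) (hab : a ≤ b) (hb : b ≤ γ.len) :
    Curve X where
  len := b - a
  len_nonneg := sub_nonneg.mpr hab
  toFun s := γ.toFun (a + s)
  lipschitzOn := fun s hs t ht => by
    have := γ.lipschitzOn (x := a + s) ⟨by linarith [hs.1], by linarith [hs.2]⟩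
      (y := a + t) ⟨by linarith [ht.1], by linarith [ht.2]⟩
    simpa using this

omit [BorelSpace X] [MeasurableSpace X] in
theorem curveLintegral_subcurve (g : X → ℝ≥0∞) (γ : Curve X) {a b : ℝ} (ha : 0 ≤ a)
    (hab : a ≤ b) (hb : b ≤ γ.len) :
    curveLintegral g (γ.subcurve a b ha hab hb) = ∫⁻ s in Icc a b, g (γ.toFun s) := by
  have := (measurePreserving_add_left volume a).setLIntegral_comp_preimage_emb
    (measurableEmbedding_addLeft a) (fun s => g (γ.toFun s)) (Icc a b)
  rw [← this]
  simp [curveLintegral, Curve.subcurve]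

theorem Curve.aemeasurable_comp (γ : Curve X) {g : X → ℝ≥0∞} (hg : Measurable g) :
    AEMeasurable (fun s => g (γ.toFun s)) (volume.restrict (Icc 0 γ.len)) :=
  hg.comp_aemeasurable (γ.lipschitzOn.continuousOn.aemeasurable measurableSet_Icc)

omit [BorelSpace X] in
theorem mod1_mono (μ : Measure X) {Γ Δ : Set (Curve X)} (h : Γ ⊆ Δ) : mod1 μ Γ ≤ mod1 μ Δ :=
  le_iInf₂ fun ρ hρ => iInf₂_le ρ ⟨hρ.1, fun γ hγ => hρ.2 γ (h hγ)⟩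

omit [BorelSpace X] in
theorem mod1_union_eq_zero {μ : Measure X} {Γ Δ : Set (Curve X)} (hΓ : mod1 μ Γ = 0)
    (hΔ : mod1 μ Δ = 0) : mod1 μ (Γ ∪ Δ) = 0 := by
  refine le_antisymm (ENNReal.le_of_forall_pos_le_add fun ε hε _ => ?_) zero_le
  have hpos : 0 < (ε : ℝ≥0∞) / 2 := ENNReal.half_pos (ENNReal.coe_pos.mpr hε).ne'
  obtain ⟨ρ, hρ, hρε⟩ := by simpa only [mod1, iInf_lt_iff] using hΓ.trans_lt hpos
  obtain ⟨σ, hσ, hσε⟩ := by simpa only [mod1, iInf_lt_iff] using hΔ.trans_lt hpos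
  calc mod1 μ (Γ ∪ Δ) ≤ ∫⁻ x, (ρ x + σ x) ∂μ := by
        refine iInf₂_le (fun x => ρ x + σ x) ⟨hρ.1.add hσ.1, ?_⟩
        rintro γ (hγ | hγ)
        · exact (hρ.2 γ hγ).trans (lintegral_mono fun s => le_self_add)
        · exact (hσ.2 γ hγ).trans (lintegral_mono fun s => le_add_self)
    _ = ∫⁻ x, ρ x ∂μ + ∫⁻ x, σ x ∂μ := lintegral_add_left hρ.1 _
    _ ≤ ε / 2 + ε / 2 := add_le_add hρε.le hσε.le
    _ = 0 + ε := by rw [ENNReal.add_halves, zero_add]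

omit [BorelSpace X] in
theorem mod1_subcurve_le (μ : Measure X) (Γ : Set (Curve X)) :
    mod1 μ {γ | ∃ a b ha hab hb, γ.subcurve a b ha hab hb ∈ Γ} ≤ mod1 μ Γ := by
  refine le_iInf₂ fun ρ hρ => iInf₂_le ρ ⟨hρ.1, ?_⟩
  rintro γ ⟨a, b, ha, hab, hb, hγ⟩
  have := hρ.2 _ hγ
  rw [curveLintegral_subcurve] at this
  exact this.trans (lintegral_mono_set (Icc_subset_Icc ha hb))

theorem mod1_curveLintegral_eq_top {μ : Measure X} {g : X → ℝ≥0∞} (hg : Measurable g)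
    (hfin : ∫⁻ x, g x ∂μ ≠ ⊤) : mod1 μ {γ | curveLintegral g γ = ⊤} = 0 := by
  refine le_antisymm (ENNReal.le_of_forall_pos_le_add fun ε hε _ => ?_) zero_le
  have hfin' : ∫⁻ x, g x ∂μ + 1 ≠ ⊤ := by simp [hfin]
  have hc0 : (ε : ℝ≥0∞) / (∫⁻ x, g x ∂μ + 1) ≠ 0 := by simp [hε.ne', hfin]
  calc mod1 μ {γ | curveLintegral g γ = ⊤}
      ≤ ∫⁻ x, (ε / (∫⁻ x, g x ∂μ + 1)) * g x ∂μ := by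
        refine iInf₂_le (fun x => (ε / (∫⁻ x, g x ∂μ + 1)) * g x) ⟨hg.const_mul _, ?_⟩
        intro γ (hγ : curveLintegral g γ = ⊤)
        rw [curveLintegral, lintegral_const_mul'' _ (γ.aemeasurable_comp hg)]
        rw [curveLintegral] at hγ
        simp [hγ, ENNReal.mul_top hc0]
    _ = ε / (∫⁻ x, g x ∂μ + 1) * ∫⁻ x, g x ∂μ := lintegral_const_mul _ hg
    _ ≤ ε / (∫⁻ x, g x ∂μ + 1) * (∫⁻ x, g x ∂μ + 1) := by gcongr; exact le_self_add
    _ = 0 + ε := by rw [ENNReal.div_mul_cancel (by simp) hfin', zero_add]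

/-- The curves violating an upper gradient inequality along some subcurve, or along which the
weak upper gradient is not integrable, are negligible. -/
theorem IsWeakUpperGradientOn.mod1_exceptional {μ : Measure X} {g : X → ℝ≥0∞} {u : X → ℝ}
    (hg : IsWeakUpperGradientOn μ g u univ) (hfin : ∫⁻ x, g x ∂μ ≠ ⊤) :
    mod1 μ {γ : Curve X | ¬ (curveLintegral g γ ≠ ⊤ ∧
      ∀ s ∈ Icc 0 γ.len, ∀ t ∈ Icc 0 γ.len, s ≤ t →
        ENNReal.ofReal |u (γ.toFun s) - u (γ.toFun t)| ≤
          ∫⁻ x in Icc s t, g (γ.toFun x))} = 0 := by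
  refine le_antisymm ((mod1_mono μ ?_).trans (mod1_union_eq_zero
    (mod1_curveLintegral_eq_top hg.1 hfin)
    (le_antisymm ((mod1_subcurve_le μ _).trans hg.2.le) zero_le)).le) zero_le
  intro γ hγ
  by_contra hcon
  simp only [mem_union, not_or] at hcon
  refine hγ ⟨hcon.1, fun s hs t ht hst => ?_⟩
  by_contra hbad
  refine hcon.2 ⟨s, t, hs.1, hst, ht.2, ?_, fun _ _ => mem_univ _, fun hineq => hbad ?_⟩
  · refine ⟨0, ⟨le_rfl, sub_nonneg.mpr hst⟩, t - s, ⟨sub_nonneg.mpr hst, le_rfl⟩, fun heq => ?_⟩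
    simp only [Curve.subcurve, add_zero, add_sub_cancel] at heq
    simp [heq] at hbad
  · rw [UpperGradIneq, curveLintegral_subcurve] at hineq
    simpa [Curve.subcurve] using hineq

omit [MeasurableSpace X] [BorelSpace X] in
theorem LocallyLipschitz.exists_lipschitzOnWith_comp_curve {u : X → ℝ} (hu : LocallyLipschitz u)
    (γ : Curve X) : ∃ K, LipschitzOnWith K (fun s => u (γ.toFun s)) (Icc 0 γ.len) := by
  obtain ⟨K, hK⟩ := hu.locallyLipschitzOn.exists_lipschitzOnWith_of_compact
    (isCompact_Icc.image_of_continuousOn γ.lipschitzOn.continuousOn)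
  exact ⟨K * 1, hK.comp γ.lipschitzOn (mapsTo_image _ _)⟩

theorem IsWeakUpperGradientOn.switch {μ : Measure X} {g h k : X → ℝ≥0∞} {u v m : X → ℝ}
    (hu : LocallyLipschitz u) (hv : LocallyLipschitz v) (hm : LocallyLipschitz m)
    (hg : IsWeakUpperGradientOn μ g u univ) (hh : IsWeakUpperGradientOn μ h v univ)
    (hgfin : ∫⁻ x, g x ∂μ ≠ ⊤) (hhfin : ∫⁻ x, h x ∂μ ≠ ⊤) (hkm : Measurable k)
    (hside : (∀ x, m x ≤ u x ∧ m x ≤ v x) ∨ ∀ x, u x ≤ m x ∧ v x ≤ m x)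
    (hk : ∀ x, (m x = u x ∧ k x = g x) ∨ (m x = v x ∧ k x = h x)) :
    IsWeakUpperGradientOn μ k m univ := by
  refine ⟨hkm, le_antisymm ((mod1_mono μ ?_).trans (mod1_union_eq_zero
    (hg.mod1_exceptional hgfin) (hh.mod1_exceptional hhfin)).le) zero_le⟩
  rintro γ ⟨-, -, hγ⟩
  by_contra hcon
  simp only [mem_union, mem_ofPred_eq, not_or, not_not] at hcon
  obtain ⟨⟨hgi, hgu⟩, hhi, hhv⟩ := hcon
  obtain ⟨K₁, h₁⟩ := hu.exists_lipschitzOnWith_comp_curve γ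
  obtain ⟨K₂, h₂⟩ := hv.exists_lipschitzOnWith_comp_curve γ
  obtain ⟨K₃, h₃⟩ := hm.exists_lipschitzOnWith_comp_curve γ
  exact hγ (ofReal_abs_sub_le_of_switch γ.len_nonneg
    (h₁.weaken (le_max_left K₁ (max K₂ K₃)))
    (h₂.weaken ((le_max_left K₂ K₃).trans (le_max_right _ _)))
    (h₃.weaken ((le_max_right K₂ K₃).trans (le_max_right _ _)))
    (γ.aemeasurable_comp hg.1) (γ.aemeasurable_comp hh.1) hgi hhi hgu hhv
    (hside.imp (fun H s => H _) fun H s => H _) fun s => hk _)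

theorem gradEnergy_min_add_gradEnergy_max_le (μ : Measure X) {u v : X → ℝ}
    (hu : LocallyLipschitz u) (hv : LocallyLipschitz v) :
    gradEnergy μ (fun x => min (u x) (v x)) univ + gradEnergy μ (fun x => max (u x) (v x)) univ ≤
      gradEnergy μ u univ + gradEnergy μ v univ := by
  unfold gradEnergy
  simp only [Measure.restrict_univ]
  refine ENNReal.le_iInf₂_add_iInf₂ fun g hg h hh => ?_
  by_cases hgfin : ∫⁻ x, g x ∂μ = ⊤
  · simp [hgfin]
  by_cases hhfin : ∫⁻ x, h x ∂μ = ⊤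
  · simp [hhfin]
  have hS : MeasurableSet {x | u x ≤ v x} :=
    measurableSet_le hu.continuous.measurable hv.continuous.measurable
  set k : X → ℝ≥0∞ := fun x => if u x ≤ v x then g x else h x with hkdef
  set l : X → ℝ≥0∞ := fun x => if u x ≤ v x then h x else g x with hldef
  have hkm : Measurable k := hg.1.ite hS hh.1
  have hlm : Measurable l := hh.1.ite hS hg.1
  have hk : IsWeakUpperGradientOn μ k (fun x => min (u x) (v x)) univ :=
    hg.switch hu hv (hu.min hv) hh hgfin hhfin hkm
      (.inl fun x => ⟨min_le_left _ _, min_le_right _ _⟩) fun x => by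
        by_cases hx : u x ≤ v x
        · exact .inl ⟨min_eq_left hx, if_pos hx⟩
        · exact .inr ⟨min_eq_right (not_le.mp hx).le, if_neg hx⟩
  have hl : IsWeakUpperGradientOn μ l (fun x => max (u x) (v x)) univ :=
    hg.switch hu hv (hu.max hv) hh hgfin hhfin hlm
      (.inr fun x => ⟨le_max_left _ _, le_max_right _ _⟩) fun x => by
        by_cases hx : u x ≤ v x
        · exact .inr ⟨max_eq_right hx, if_pos hx⟩
        · exact .inl ⟨max_eq_left (not_le.mp hx).le, if_neg hx⟩
  calc _ ≤ ∫⁻ x, k x ∂μ + ∫⁻ x, l x ∂μ := add_le_add (iInf₂_le k hk) (iInf₂_le l hl)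
    _ = ∫⁻ x, (g x + h x) ∂μ := by
        rw [← lintegral_add_left hkm]
        refine lintegral_congr fun x => ?_
        by_cases hx : u x ≤ v x <;> simp [hkdef, hldef, hx, add_comm]
    _ = _ := lintegral_add_left hg.1 _

omit [MeasurableSpace X] [BorelSpace X] in
theorem locLipschitzOn_univ_iff {u : X → ℝ} : LocLipschitzOn u univ ↔ LocallyLipschitz u := by
  simp [LocLipschitzOn, LocallyLipschitz]

omit [BorelSpace X] in
theorem perimeter_univ (μ : Measure X) (E : Set X) :
    perimeter μ E univ = variationOn μ (E.indicator fun _ => (1 : ℝ)) univ := by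
  refine le_antisymm (iInf₂_le univ ⟨isOpen_univ, subset_rfl⟩) (le_iInf₂ fun W hW => ?_)
  rw [univ_subset_iff.mp hW.2]

omit [BorelSpace X] in
theorem perimeter_le_liminf {μ : Measure X} {E : Set X} {u : ℕ → X → ℝ}
    (hu : ∀ n, LocallyLipschitz (u n))
    (hlim : TendstoL1loc μ univ u (E.indicator fun _ => (1 : ℝ))) :
    perimeter μ E univ ≤ liminf (fun n => gradEnergy μ (u n) univ) atTop := by
  rw [perimeter_univ]
  exact iInf₂_le u ⟨fun n => locLipschitzOn_univ_iff.mpr (hu n), hlim⟩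

omit [BorelSpace X] in
theorem perimeter_congr_ae {μ : Measure X} {E F : Set X} (h : E =ᵐ[μ] F) :
    perimeter μ E univ = perimeter μ F univ := by
  have hind := indicator_ae_eq_of_ae_eq_set (f := fun _ => (1 : ℝ)) h
  have key : ∀ u : ℕ → X → ℝ, TendstoL1loc μ univ u (E.indicator fun _ => (1 : ℝ)) ↔
      TendstoL1loc μ univ u (F.indicator fun _ => (1 : ℝ)) := by
    intro u
    have : ∀ (W : Set X) n,
        ∫⁻ x in W, ENNReal.ofReal |u n x - E.indicator (fun _ => (1 : ℝ)) x| ∂μ =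
          ∫⁻ x in W, ENNReal.ofReal |u n x - F.indicator (fun _ => (1 : ℝ)) x| ∂μ := by
      intro W n
      refine lintegral_congr_ae ?_
      filter_upwards [ae_restrict_of_ae hind] with x hx
      rw [hx]
    simp only [TendstoL1loc, this]
  simp only [perimeter_univ, variationOn, key]

omit [BorelSpace X] in
theorem tendstoL1loc_univ_of_ball {μ : Measure X} {u : ℕ → X → ℝ} {v : X → ℝ} (x₀ : X)
    (h : ∀ N : ℕ, Tendsto (fun n => ∫⁻ x in ball x₀ N, ENNReal.ofReal |u n x - v x| ∂μ)
      atTop (𝓝 0)) :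
    TendstoL1loc μ univ u v := by
  intro W _ hW _
  obtain ⟨R, hR⟩ := (hW.isBounded.subset subset_closure).subset_ball x₀
  obtain ⟨N, hN⟩ := exists_nat_ge R
  exact tendsto_of_tendsto_of_tendsto_of_le_of_le tendsto_const_nhds (h N) (fun _ => zero_le)
    fun n => lintegral_mono_set (hR.trans (ball_subset_ball hN))

omit [BorelSpace X] in
theorem exists_locallyLipschitz_of_perimeter_lt [ProperSpace X] {μ : Measure X} {E : Set X}
    {c : ℝ≥0∞} (hc : perimeter μ E univ < c) (x₀ : X) (R : ℝ) {ε : ℝ≥0∞} (hε : 0 < ε) :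
    ∃ u : X → ℝ, LocallyLipschitz u ∧ gradEnergy μ u univ < c ∧
      ∫⁻ x in ball x₀ R, ENNReal.ofReal |u x - E.indicator (fun _ => (1 : ℝ)) x| ∂μ < ε := by
  simp only [perimeter_univ, variationOn, iInf_lt_iff] at hc
  obtain ⟨u, ⟨hu, hlim⟩, huc⟩ := hc
  have hball := hlim (ball x₀ R) isOpen_ball
    ((isCompact_closedBall x₀ R).of_isClosed_subset isClosed_closure closure_ball_subset_closedBall)
    (subset_univ _)
  obtain ⟨n, hn, hn'⟩ :=
    ((frequently_lt_of_liminf_lt (by isBoundedDefault) huc).and_eventually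
      (hball.eventually_lt_const hε)).exists
  exact ⟨u n, locLipschitzOn_univ_iff.mp (hu n), hn, hn'⟩

omit [BorelSpace X] in
/-- Recovery sequences on balls exhausting the space. -/
theorem exists_seq_of_perimeter_lt [ProperSpace X] {μ : Measure X} {E : ℕ → Set X}
    {c : ℝ≥0∞} (hc : ∀ n, perimeter μ (E n) univ < c) (x₀ : X) :
    ∃ u : ℕ → X → ℝ, (∀ n, LocallyLipschitz (u n)) ∧ (∀ n, gradEnergy μ (u n) univ < c) ∧
      ∀ N : ℕ, Tendsto (fun n => ∫⁻ x in ball x₀ N,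
        ENNReal.ofReal |u n x - (E n).indicator (fun _ => (1 : ℝ)) x| ∂μ) atTop (𝓝 0) := by
  have hpos : ∀ n : ℕ, 0 < ((n : ℝ≥0∞))⁻¹ := fun n => by simp
  choose u hu huc hlim using fun n : ℕ =>
    exists_locallyLipschitz_of_perimeter_lt (hc n) x₀ n (hpos n)
  refine ⟨u, hu, huc, fun N => tendsto_of_tendsto_of_tendsto_of_le_of_le' tendsto_const_nhds
    ENNReal.tendsto_inv_nat_nhds_zero (.of_forall fun _ => zero_le) ?_⟩
  filter_upwards [eventually_ge_atTop N] with n hn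
  exact (lintegral_mono_set (ball_subset_ball (by exact_mod_cast hn))).trans (hlim n).le

theorem tendsto_lintegral_zero_of_le_add {Ω : Type*} [MeasurableSpace Ω] {μ : Measure Ω}
    {s : Set Ω} {f g h : ℕ → Ω → ℝ}
    (hf : Tendsto (fun n => ∫⁻ x in s, ENNReal.ofReal |f n x| ∂μ) atTop (𝓝 0))
    (hg : Tendsto (fun n => ∫⁻ x in s, ENNReal.ofReal |g n x| ∂μ) atTop (𝓝 0))
    (hfm : ∀ n, Measurable (f n)) (hle : ∀ n x, |h n x| ≤ |f n x| + |g n x|) :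
    Tendsto (fun n => ∫⁻ x in s, ENNReal.ofReal |h n x| ∂μ) atTop (𝓝 0) := by
  have hsum := hf.add hg
  rw [add_zero] at hsum
  refine tendsto_of_tendsto_of_tendsto_of_le_of_le tendsto_const_nhds hsum (fun _ => zero_le)
    fun n => ?_
  simp only
  rw [← lintegral_add_left (hfm n).abs.ennreal_ofReal]
  refine lintegral_mono fun x => ?_
  rw [← ENNReal.ofReal_add (abs_nonneg _) (abs_nonneg _)]
  exact ENNReal.ofReal_le_ofReal (hle n x)

/-- The perimeter is submodular. -/
theorem perimeter_inter_add_perimeter_union_le [ProperSpace X] (μ : Measure X) {E F : Set X}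
    (hE : MeasurableSet E) :
    perimeter μ (E ∩ F) univ + perimeter μ (E ∪ F) univ ≤
      perimeter μ E univ + perimeter μ F univ := by
  rcases isEmpty_or_nonempty X with hX | ⟨⟨x₀⟩⟩
  · rw [Subsingleton.elim (E ∩ F) E, Subsingleton.elim (E ∪ F) F]
  refine ENNReal.le_add_of_forall_gt fun a ha b hb => ?_
  obtain ⟨u, hu, hua, hulim⟩ := exists_seq_of_perimeter_lt (fun _ => ha) x₀
  obtain ⟨v, hv, hvb, hvlim⟩ := exists_seq_of_perimeter_lt (fun _ => hb) x₀
  have hmeas : ∀ n, Measurable fun x => u n x - E.indicator (fun _ => (1 : ℝ)) x := fun n =>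
    (hu n).continuous.measurable.sub (measurable_const.indicator hE)
  have hmin := perimeter_le_liminf (μ := μ) (E := E ∩ F) (fun n => (hu n).min (hv n))
    (tendstoL1loc_univ_of_ball x₀ fun N =>
      tendsto_lintegral_zero_of_le_add (hulim N) (hvlim N) hmeas fun n x => by
        have : (E ∩ F).indicator (fun _ => (1 : ℝ)) x =
            min (E.indicator (fun _ => (1 : ℝ)) x) (F.indicator (fun _ => (1 : ℝ)) x) := by
          by_cases h₁ : x ∈ E <;> by_cases h₂ : x ∈ F <;> simp [h₁, h₂]
        rw [this]
        exact (abs_min_sub_min_le_max _ _ _ _).trans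
          (max_le_add_of_nonneg (abs_nonneg _) (abs_nonneg _)))
  have hmax := perimeter_le_liminf (μ := μ) (E := E ∪ F) (fun n => (hu n).max (hv n))
    (tendstoL1loc_univ_of_ball x₀ fun N =>
      tendsto_lintegral_zero_of_le_add (hulim N) (hvlim N) hmeas fun n x => by
        have : (E ∪ F).indicator (fun _ => (1 : ℝ)) x =
            max (E.indicator (fun _ => (1 : ℝ)) x) (F.indicator (fun _ => (1 : ℝ)) x) := by
          by_cases h₁ : x ∈ E <;> by_cases h₂ : x ∈ F <;> simp [h₁, h₂]
        rw [this]
        exact (abs_max_sub_max_le_max _ _ _ _).trans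
          (max_le_add_of_nonneg (abs_nonneg _) (abs_nonneg _)))
  refine (add_le_add hmin hmax).trans ((ENNReal.liminf_add_liminf_le _ _).trans ?_)
  refine liminf_le_of_frequently_le' (Frequently.of_forall fun n => ?_)
  exact (gradEnergy_min_add_gradEnergy_max_le μ (hu n) (hv n)).trans
    (add_le_add (hua n).le (hvb n).le)

theorem perimeter_union_le [ProperSpace X] (μ : Measure X) {E : Set X} (hE : MeasurableSet E)
    (F : Set X) : perimeter μ (E ∪ F) univ ≤ perimeter μ E univ + perimeter μ F univ :=
  le_add_self.trans (perimeter_inter_add_perimeter_union_le μ hE)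

omit [BorelSpace X] in
theorem perimeter_empty (μ : Measure X) : perimeter μ ∅ univ = 0 := by
  have hmod : mod1 μ (∅ : Set (Curve X)) = 0 :=
    le_antisymm ((iInf₂_le (fun _ => 0) ⟨measurable_const, by simp⟩).trans (by simp)) zero_le
  have henergy : gradEnergy μ (fun _ => (0 : ℝ)) univ = 0 := by
    refine le_antisymm ((iInf₂_le (fun _ => 0) ⟨measurable_const, ?_⟩).trans (by simp)) zero_le
    simpa [UpperGradIneq] using hmod
  refine le_antisymm ((perimeter_le_liminf (u := fun _ _ => 0)
    (fun _ => LocallyLipschitz.const 0) ?_).trans (by simp [henergy])) zero_le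
  intro W _ _ _
  simp

/-- Lower semicontinuity of the perimeter along increasing unions. -/
theorem perimeter_iUnion_le_of_monotone [ProperSpace X] {μ : Measure X}
    (hball : ∀ (x : X) (r : ℝ), μ (ball x r) < ⊤) {S : ℕ → Set X} (hS : Monotone S)
    (hSm : ∀ n, MeasurableSet (S n)) {c : ℝ≥0∞} (hc : ∀ n, perimeter μ (S n) univ ≤ c) :
    perimeter μ (⋃ n, S n) univ ≤ c := by
  rcases isEmpty_or_nonempty X with hX | ⟨⟨x₀⟩⟩
  · rw [Subsingleton.elim (⋃ n, S n) (S 0)]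
    exact hc 0
  refine le_of_forall_gt_imp_ge_of_dense fun d hd => ?_
  obtain ⟨u, hu, hud, hulim⟩ := exists_seq_of_perimeter_lt (fun n => (hc n).trans_lt hd) x₀
  refine (perimeter_le_liminf hu (tendstoL1loc_univ_of_ball x₀ fun N => ?_)).trans
    (liminf_le_of_frequently_le' (Frequently.of_forall fun n => (hud n).le))
  have hdiff : ∀ n, MeasurableSet ((⋃ n, S n) \ S n) := fun n =>
    (MeasurableSet.iUnion hSm).diff (hSm n)
  refine tendsto_lintegral_zero_of_le_add (hulim N)
    (g := fun n => ((⋃ n, S n) \ S n).indicator fun _ => (1 : ℝ)) ?_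
    (fun n => (hu n).continuous.measurable.sub (measurable_const.indicator (hSm n)))
    fun n x => ?_
  · have hint : ∀ n, ∫⁻ x in ball x₀ N,
        ENNReal.ofReal |((⋃ n, S n) \ S n).indicator (fun _ => (1 : ℝ)) x| ∂μ =
          μ.restrict (ball x₀ N) ((⋃ n, S n) \ S n) := by
      intro n
      rw [← lintegral_indicator_one (hdiff n)]
      refine lintegral_congr fun x => ?_
      by_cases hx : x ∈ (⋃ n, S n) \ S n
      · simp only [indicator_of_mem hx]; simp
      · simp only [indicator_of_notMem hx]; simp
    simp only [hint]
    have := tendsto_measure_iInter_atTop (μ := μ.restrict (ball x₀ N))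
      (s := fun n => (⋃ n, S n) \ S n) (fun n => (hdiff n).nullMeasurableSet)
      (fun m n hmn => sdiff_subset_sdiff_right (hS hmn))
      ⟨0, ne_top_of_le_ne_top (hball x₀ N).ne
        ((measure_mono (subset_univ _)).trans_eq (Measure.restrict_apply_univ _))⟩
    rwa [← sdiff_iUnion, sdiff_self, measure_empty] at this
  · have hsub : S n ⊆ ⋃ n, S n := subset_iUnion S n
    have : (⋃ n, S n).indicator (fun _ => (1 : ℝ)) x = (S n).indicator (fun _ => (1 : ℝ)) x +
        ((⋃ n, S n) \ S n).indicator (fun _ => (1 : ℝ)) x := by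
      conv_lhs => rw [← union_sdiff_cancel hsub, indicator_union_of_disjoint disjoint_sdiff_right]
    rw [this, ← sub_sub]
    exact abs_sub _ _

theorem perimeter_iUnion_le [ProperSpace X] {μ : Measure X}
    (hball : ∀ (x : X) (r : ℝ), μ (ball x r) < ⊤) {S : ℕ → Set X}
    (hSm : ∀ n, MeasurableSet (S n)) :
    perimeter μ (⋃ n, S n) univ ≤ ∑' n, perimeter μ (S n) univ := by
  rw [← iUnion_accumulate]
  refine perimeter_iUnion_le_of_monotone hball monotone_accumulate
    (fun n => .biUnion (to_countable _) fun i _ => hSm i) fun n => ?_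
  refine le_trans ?_ (ENNReal.sum_le_tsum (Finset.range (n + 1)))
  induction n with
  | zero => simp
  | succ n ih =>
    rw [accumulate_succ, Finset.sum_range_succ]
    exact (perimeter_union_le μ (.biUnion (to_countable _) fun i _ => hSm i) _).trans
      (add_le_add_left ih _)

/-- An indecomposable set contained in `A ∪ B`, where `A` and `B` split the perimeter of their
union, meets only one of the two in positive measure. -/
theorem measure_inter_eq_zero_or_of_indecomposable [ProperSpace X] {μ : Measure X}
    {A B H : Set X} (hA : MeasurableSet A) (hH : MeasurableSet H)
    (hAB : Disjoint A B) (hadd : perimeter μ A univ + perimeter μ B univ ≤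
      perimeter μ (A ∪ B) univ) (hABfin : perimeter μ (A ∪ B) univ < ⊤)
    (hHfin : perimeter μ H univ < ⊤) (hind : IsIndecomposableIn μ H univ)
    (hsub : μ (H \ (A ∪ B)) = 0) : μ (H ∩ A) = 0 ∨ μ (H \ A) = 0 := by
  have hHA := perimeter_inter_add_perimeter_union_le μ (F := A) hH
  have hHB := perimeter_inter_add_perimeter_union_le μ (F := B) hH
  have hcross := perimeter_inter_add_perimeter_union_le μ (F := H ∪ B) (hH.union hA)
  rw [← union_inter_distrib_left, hAB.inter_eq, union_empty, ← union_union_distrib_left,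
    perimeter_congr_ae (union_ae_eq_right.mpr hsub)] at hcross
  have hHB' : (H ∩ B : Set X) =ᵐ[μ] (H \ A : Set X) := by
    refine ae_eq_set.mpr ⟨?_, ?_⟩
    · rw [sdiff_eq_empty.mpr]
      · exact measure_empty
      · exact fun x hx => ⟨hx.1, hAB.notMem_of_mem_right hx.2⟩
    · refine measure_mono_null ?_ hsub
      intro x hx
      refine ⟨hx.1.1, ?_⟩
      rintro (hxA | hxB)
      · exact hx.1.2 hxA
      · exact hx.2 ⟨hx.1.1, hxB⟩
  rw [perimeter_congr_ae hHB'] at hHB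
  have hle : perimeter μ (H ∩ A) univ + perimeter μ (H \ A) univ ≤ perimeter μ H univ := by
    set p := perimeter μ H univ
    set q := perimeter μ (A ∪ B) univ
    have hpq : p + q ≠ ⊤ := ENNReal.add_ne_top.mpr ⟨hHfin.ne, hABfin.ne⟩
    refine (ENNReal.add_le_add_iff_right hpq).mp ?_
    calc _ ≤ perimeter μ (H ∩ A) univ + perimeter μ (H \ A) univ +
          (perimeter μ (H ∪ A) univ + perimeter μ (H ∪ B) univ) := by gcongr
      _ = (perimeter μ (H ∩ A) univ + perimeter μ (H ∪ A) univ) +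
          (perimeter μ (H \ A) univ + perimeter μ (H ∪ B) univ) := by ring
      _ ≤ (p + perimeter μ A univ) + (p + perimeter μ B univ) := add_le_add hHA hHB
      _ = p + (p + (perimeter μ A univ + perimeter μ B univ)) := by ring
      _ ≤ p + (p + q) := by gcongr
  by_contra! hcon
  refine hind ⟨H ∩ A, H \ A, hH.inter hA, hH.diff hA, disjoint_sdiff_inter.symm, ?_,
    (le_self_add.trans hle).trans_lt hHfin, (le_add_self.trans hle).trans_lt hHfin,
    pos_iff_ne_zero.mpr hcon.1, pos_iff_ne_zero.mpr hcon.2, le_antisymm ?_ hle⟩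
  · rw [inter_univ, inter_union_sdiff]
  · conv_lhs => rw [← inter_union_sdiff H A]
    exact perimeter_union_le μ (hH.inter hA) _

/-- An indecomposable set contained in `E` up to a null set is, up to a null set, contained in or
disjoint from each essential connected component of `E`. -/
theorem IsEssentialPartition.measure_inter_eq_zero_or [ProperSpace X] {μ : Measure X}
    (hball : ∀ (x : X) (r : ℝ), μ (ball x r) < ⊤) {E H : Set X} {I : Set ℕ} {G : ℕ → Set X}
    (hE : IsEssentialPartition μ E I G) (hEfin : perimeter μ E univ < ⊤)
    (hH : MeasurableSet H) (hHfin : perimeter μ H univ < ⊤)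
    (hind : IsIndecomposableIn μ H univ) (hsub : μ (H \ E) = 0) {i : ℕ} (hi : i ∈ I) :
    μ (H ∩ G i) = 0 ∨ μ (H \ G i) = 0 := by
  classical
  obtain ⟨hmeas, hdisj, hunion, -, -, -, hper⟩ := hE
  set S : ℕ → Set X := fun j => if j ∈ I ∧ j ≠ i then G j else ∅ with hSdef
  have hSm : ∀ j, MeasurableSet (S j) := fun j => by
    by_cases hj : j ∈ I ∧ j ≠ i
    · simpa [hSdef, hj] using hmeas j hj.1
    · simp [hSdef, hj]
  have hmem : ∀ x, x ∈ ⋃ j, S j ↔ ∃ j, (j ∈ I ∧ j ≠ i) ∧ x ∈ G j := fun x => by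
    simp only [mem_iUnion, hSdef]
    refine exists_congr fun j => ?_
    by_cases hj : j ∈ I ∧ j ≠ i
    · simp [hj]
    · rw [if_neg hj]
      exact ⟨False.elim, fun h => (hj h.1).elim⟩
  have hEeq : G i ∪ ⋃ j, S j = E := by
    ext x
    rw [mem_union, hmem, ← hunion, mem_iUnion₂]
    constructor
    · rintro (hx | ⟨j, hj, hx⟩)
      · exact ⟨i, hi, hx⟩
      · exact ⟨j, hj.1, hx⟩
    · rintro ⟨j, hj, hx⟩
      by_cases hji : j = i
      · exact .inl (hji ▸ hx)
      · exact .inr ⟨j, ⟨hj, hji⟩, hx⟩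
  have hadd : perimeter μ (G i) univ + perimeter μ (⋃ j, S j) univ ≤ perimeter μ E univ := by
    rw [hper, tsum_subtype I fun j => perimeter μ (G j) univ, ENNReal.tsum_eq_add_tsum_ite i,
      indicator_of_mem hi]
    refine add_le_add le_rfl ((perimeter_iUnion_le hball hSm).trans_eq (tsum_congr fun j => ?_))
    by_cases hji : j = i
    · simp [hSdef, hji, perimeter_empty]
    · by_cases hj : j ∈ I <;> simp [hSdef, hji, hj, perimeter_empty]
  rw [← hEeq] at hadd hEfin hsub
  refine measure_inter_eq_zero_or_of_indecomposable (hmeas i hi) hH ?_ hadd hEfin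
    hHfin hind hsub
  rw [disjoint_left]
  intro x hx hxS
  obtain ⟨j, hj, hxj⟩ := (hmem x).mp hxS
  exact disjoint_left.mp (hdisj j hj.1 i hi hj.2) hxj hx

/-- **Proposition (iv).** In a PI space with `μ(X) = ∞`, if `E, F` are
indecomposable sets and `μ(E ∖ sat(F)) = 0`, then `μ(sat(E) ∖ sat(F)) = 0`. -/
theorem saturation_subset_saturation
    [ProperSpace X] (μ : Measure X)
    (hball : ∀ (x : X) (r : ℝ), 0 < r → 0 < μ (ball x r) ∧ μ (ball x r) < ⊤)
    (hPI : IsPISpace μ) (hinf : μ Set.univ = ⊤)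
    (E : Set X) (hE : MeasurableSet E) (hEfin : perimeter μ E Set.univ < ⊤)
    (hEindec : IsIndecomposableIn μ E Set.univ)
    (hEcompfin : perimeter μ (Set.univ \ E) Set.univ < ⊤)
    (I : Set ℕ) (G : ℕ → Set X)
    (hdecE : IsEssentialPartition μ (Set.univ \ E) I G)
    (F : Set X) (hF : MeasurableSet F) (hFfin : perimeter μ F Set.univ < ⊤)
    (hFindec : IsIndecomposableIn μ F Set.univ)
    (hFcompfin : perimeter μ (Set.univ \ F) Set.univ < ⊤)
    (J : Set ℕ) (H : ℕ → Set X)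
    (hdecF : IsEssentialPartition μ (Set.univ \ F) J H)
    (h : μ (E \ saturationOf μ F J H) = 0) :
    μ (saturationOf μ E I G \ saturationOf μ F J H) = 0 := by
  have hball' : ∀ (x : X) (r : ℝ), μ (ball x r) < ⊤ := fun x r => by
    rcases le_or_gt r 0 with hr | hr
    · simp [ball_eq_empty.mpr hr]
    · exact (hball x r hr).2
  have hcomp : ∀ j ∈ J, μ (H j) = ⊤ → Disjoint (H j) (saturationOf μ F J H) := by
    intro j hj hjinf
    rw [disjoint_left]
    rintro x hx (hxF | hxH)
    · have : x ∈ univ \ F := hdecF.2.2.1 ▸ mem_biUnion hj hx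
      exact this.2 hxF
    · obtain ⟨k, hk, hxk⟩ := mem_iUnion₂.mp hxH
      have hjk : j ≠ k := fun hjk => hk.2.ne (hjk ▸ hjinf)
      exact disjoint_left.mp (hdecF.2.1 j hj k hk.1 hjk) hx hxk
  have hhole : ∀ i, i ∈ I ∧ μ (G i) < ⊤ → ∀ j ∈ J, μ (H j) = ⊤ → μ (H j ∩ G i) = 0 := by
    intro i hi j hj hjinf
    have hsub : μ (H j \ (univ \ E)) = 0 := by
      refine measure_mono_null ?_ h
      intro x hx
      refine ⟨?_, disjoint_left.mp (hcomp j hj hjinf) hx.1⟩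
      by_contra hxE
      exact hx.2 ⟨mem_univ x, hxE⟩
    refine (hdecE.measure_inter_eq_zero_or hball' hEcompfin (hdecF.1 j hj)
      (hdecF.2.2.2.2.1 j hj) (hdecF.2.2.2.2.2.1 j hj) hsub hi.1).resolve_right fun hnull => ?_
    have hle : μ (H j) ≤ μ (H j \ G i) + μ (G i) :=
      (measure_mono (by rw [sdiff_union_self]; exact subset_union_left)).trans
        (measure_union_le _ _)
    rw [hnull, zero_add, hjinf] at hle
    exact hle.not_gt hi.2
  have hnull : μ (⋃ i ∈ {i | i ∈ I ∧ μ (G i) < ⊤}, ⋃ j ∈ {j | j ∈ J ∧ μ (H j) = ⊤},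
      H j ∩ G i) = 0 :=
    (measure_biUnion_null_iff (to_countable _)).mpr fun i hi =>
      (measure_biUnion_null_iff (to_countable _)).mpr fun j hj => hhole i hi j hj.1 hj.2
  refine measure_mono_null (fun x hx => ?_) (measure_union_null h hnull)
  rcases hx with ⟨hxE | hxG, hxF⟩
  · exact .inl ⟨hxE, hxF⟩
  · obtain ⟨i, hi, hxi⟩ := mem_iUnion₂.mp hxG
    have hxcF : x ∈ univ \ F := ⟨mem_univ x, fun hxF' => hxF (.inl hxF')⟩
    rw [← hdecF.2.2.1] at hxcF
    obtain ⟨j, hj, hxj⟩ := mem_iUnion₂.mp hxcF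
    have hjinf : μ (H j) = ⊤ := by
      by_contra hfin
      exact hxF (.inr (mem_iUnion₂.mpr ⟨j, ⟨hj, lt_top_iff_ne_top.mpr hfin⟩, hxj⟩))
    exact .inr (mem_biUnion hi (mem_biUnion (show j ∈ {j | _} from ⟨hj, hjinf⟩) ⟨hxj, hxi⟩))
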